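/- arXiv:1012.1103 — 2 statements merged into one kernel-verified Lean document; each statement's English description precedes it below -/
import Mathlib

section
/- Let (X,T) be a topological dynamical system and let K ⊆ X be a non-empty compact set. Then the Bowen topological entropy of K equals the supremum of the measure-theoretical lower entropies over all Borel probability measures giving K full measure: h^B_top(T,K) = sup { h̲_μ(T) : μ a Borel probability measure on X with μ(K) = 1 }. -/
open Filter Set MeasureTheory Topology
open scoped ENNReal NNReal

section Core

variable {X : Type*} [MetricSpace X]

/-- The open Bowen ball `B_n(x, ε)` = `{y : d_n(x,y) < ε}` where
`d_n(x,y) = max_{0 ≤ k ≤ n-1} d(T^k x, T^k y)` is the `n`-th Bowen metric. -/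
def bowenBall (T : X → X) (x : X) (n : ℕ) (ε : ℝ) : Set X :=
  {y | ∀ k < n, dist (T^[k] x) (T^[k] y) < ε}

/-- The closed Bowen ball `B̄_n(x, ε)` = `{y : d_n(x,y) ≤ ε}`. -/
def bowenClosedBall (T : X → X) (x : X) (n : ℕ) (ε : ℝ) : Set X :=
  {y | ∀ k < n, dist (T^[k] x) (T^[k] y) ≤ ε}

/-- `M^s_{N,ε}(Z)`: infimum of `Σ_i exp (- s n_i)` over finite or countable families
of open Bowen balls `{B_{n_i}(x_i, ε)}` with `n_i ≥ N` covering `Z`. -/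
noncomputable def Mpre (T : X → X) (s : ℝ) (N : ℕ) (ε : ℝ) (Z : Set X) : ℝ≥0∞ :=
  ⨅ (I : Set ℕ) (x : ℕ → X) (n : ℕ → ℕ) (_ : ∀ i ∈ I, N ≤ n i)
    (_ : Z ⊆ ⋃ i ∈ I, bowenBall T (x i) (n i) ε),
    ∑' i : I, ENNReal.ofReal (Real.exp (-s * n i))

/-- `M^s_ε(Z) = lim_{N → ∞} M^s_{N,ε}(Z)` (the quantity is nondecreasing in `N`). -/
noncomputable def MpreEps (T : X → X) (s : ℝ) (ε : ℝ) (Z : Set X) : ℝ≥0∞ :=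
  ⨆ N : ℕ, Mpre T s N ε Z

/-- `M^s(Z) = lim_{ε → 0} M^s_ε(Z)` (the quantity is nondecreasing as `ε` decreases). -/
noncomputable def Mtop (T : X → X) (s : ℝ) (Z : Set X) : ℝ≥0∞ :=
  ⨆ (ε : ℝ) (_ : 0 < ε), MpreEps T s ε Z

/-- Bowen's topological entropy `h^B_top(T,Z)`: the critical value of `s` at which
`M^s(Z)` jumps from `∞` to `0`. -/
noncomputable def bowenEntropy (T : X → X) (Z : Set X) : ℝ≥0∞ :=
  ⨆ (s : ℝ) (_ : Mtop T s Z = ∞), ENNReal.ofReal s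

/-- `P^s_{N,ε}(Z)`: suprema of `Σ_i exp (- s n_i)` over finite or countable pairwise
disjoint families of closed Bowen balls `{B̄_{n_i}(x_i, ε)}` with `x_i ∈ Z`, `n_i ≥ N`. -/
noncomputable def Ppre (T : X → X) (s : ℝ) (N : ℕ) (ε : ℝ) (Z : Set X) : ℝ≥0∞ :=
  ⨆ (I : Set ℕ) (x : ℕ → X) (n : ℕ → ℕ) (_ : ∀ i ∈ I, x i ∈ Z ∧ N ≤ n i)
    (_ : ∀ i ∈ I, ∀ j ∈ I, i ≠ j →
      Disjoint (bowenClosedBall T (x i) (n i) ε) (bowenClosedBall T (x j) (n j) ε)),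
    ∑' i : I, ENNReal.ofReal (Real.exp (-s * n i))

/-- `P^s_ε(Z) = lim_{N → ∞} P^s_{N,ε}(Z)` (the quantity is nonincreasing in `N`). -/
noncomputable def PpreEps (T : X → X) (s : ℝ) (ε : ℝ) (Z : Set X) : ℝ≥0∞ :=
  ⨅ N : ℕ, Ppre T s N ε Z

/-- `𝒫^s_ε(Z) = inf { Σ_{i} P^s_ε(Z_i) : ⋃_i Z_i ⊇ Z }`. -/
noncomputable def Pouter (T : X → X) (s : ℝ) (ε : ℝ) (Z : Set X) : ℝ≥0∞ :=
  ⨅ (Zs : ℕ → Set X) (_ : Z ⊆ ⋃ i, Zs i), ∑' i, PpreEps T s ε (Zs i)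

/-- `h^P_top(T,Z,ε)`: the critical value of `s` at which `𝒫^s_ε(Z)` jumps from `∞` to `0`. -/
noncomputable def packEntropyEps (T : X → X) (ε : ℝ) (Z : Set X) : ℝ≥0∞ :=
  ⨆ (s : ℝ) (_ : Pouter T s ε Z = ∞), ENNReal.ofReal s

/-- The packing topological entropy `h^P_top(T,Z) = lim_{ε → 0} h^P_top(T,Z,ε)`
(the quantity is nondecreasing as `ε` decreases). -/
noncomputable def packEntropy (T : X → X) (Z : Set X) : ℝ≥0∞ :=
  ⨆ (ε : ℝ) (_ : 0 < ε), packEntropyEps T ε Z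

/-- `r_n(Z,ε)`: the largest cardinality of an `(n,ε)`-separated subset of `Z`,
i.e. a set in which distinct points `x, y` satisfy `d_n(x,y) > ε`. -/
noncomputable def maxSep (T : X → X) (Z : Set X) (n : ℕ) (ε : ℝ) : ℝ≥0∞ :=
  ⨆ (E : Finset X) (_ : ↑E ⊆ Z ∧
    ∀ x ∈ E, ∀ y ∈ E, x ≠ y → ∃ k < n, ε < dist (T^[k] x) (T^[k] y)),
    (E.card : ℝ≥0∞)

/-- Logarithm on `ℝ≥0∞` (with `elog ∞ = ∞`), used for counting quantities. -/
noncomputable def elog (x : ℝ≥0∞) : ℝ≥0∞ :=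
  if x = ∞ then ∞ else ENNReal.ofReal (Real.log x.toReal)

/-- The upper capacity topological entropy
`h^{UC}_top(T,Z) = lim_{ε → 0} limsup_{n → ∞} (1/n) log r_n(Z,ε)`. -/
noncomputable def upcapEntropy (T : X → X) (Z : Set X) : ℝ≥0∞ :=
  ⨆ (ε : ℝ) (_ : 0 < ε), Filter.limsup (fun n : ℕ => elog (maxSep T Z n ε) / n) Filter.atTop

/-- `- log x` as a function `ℝ≥0∞ → ℝ≥0∞` (with `negLog 0 = ∞`), used for measures of balls. -/
noncomputable def negLog (x : ℝ≥0∞) : ℝ≥0∞ :=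
  if x = 0 then ∞ else ENNReal.ofReal (-Real.log x.toReal)

variable [MeasurableSpace X]

/-- The lower local entropy `h̲_μ(T,x) = lim_{ε→0} liminf_{n→∞} -(1/n) log μ(B_n(x,ε))`. -/
noncomputable def lowerLocalEntropy (T : X → X) (μ : Measure X) (x : X) : ℝ≥0∞ :=
  ⨆ (ε : ℝ) (_ : 0 < ε),
    Filter.liminf (fun n : ℕ => negLog (μ (bowenBall T x n ε)) / n) Filter.atTop

/-- The upper local entropy `h̄_μ(T,x) = lim_{ε→0} limsup_{n→∞} -(1/n) log μ(B_n(x,ε))`. -/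
noncomputable def upperLocalEntropy (T : X → X) (μ : Measure X) (x : X) : ℝ≥0∞ :=
  ⨆ (ε : ℝ) (_ : 0 < ε),
    Filter.limsup (fun n : ℕ => negLog (μ (bowenBall T x n ε)) / n) Filter.atTop

/-- The measure-theoretical lower entropy `h̲_μ(T) = ∫ h̲_μ(T,x) dμ(x)`. -/
noncomputable def lowerEntropy (T : X → X) (μ : Measure X) : ℝ≥0∞ :=
  ∫⁻ x, lowerLocalEntropy T μ x ∂μ

/-- The measure-theoretical upper entropy `h̄_μ(T) = ∫ h̄_μ(T,x) dμ(x)`. -/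
noncomputable def upperEntropy (T : X → X) (μ : Measure X) : ℝ≥0∞ :=
  ∫⁻ x, upperLocalEntropy T μ x ∂μ

end Core

/-!
For `h̲_μ(T) ≤ h^B_top(T,K)`, if `h̲_μ(T) > s` then on a set of positive measure all Bowen balls of
some fixed radius and large length `n` have mass at most `exp (-s n)`, so the outer measure of this
set bounds the cost of every cover of `K` from below (mass distribution principle).

Conversely, the least cost of a fractional cover of a function on `K` by Bowen balls is a sublinear
functional, so the Hahn–Banach and Riesz theorems turn a positive cost of the constant `1` into a
Frostman measure on `K`. The cost is positive because a fractional cover rounds to an honest one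
when the radius is doubled and the exponent is raised by `δ`. Since `∑_{n ≥ N} exp (-δ n) < 1`, each
point receives weight at least `exp (-δ n)` from the balls of some length `n`. At a fixed length the
Bowen balls are balls of a single metric, so a greedily chosen set of centres covers these points
with balls of twice the radius.
-/

section FractionalCover

variable {α ι : Type*}

/-- The fractional covers of `f` by the sets `U i`: the finitely supported weights `c` for which the
total weight of the sets containing `x` is at least `f x` for every `x`. -/
def fractionalCovers (U : ι → Set α) (f : α → ℝ) : Set (ι →₀ ℝ≥0) :=
  {c | f ≤ Finsupp.linearCombination ℝ≥0 (fun i => (U i).indicator 1) c}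

/-- The least total cost of a fractional cover of `f` by the sets `U i`, where a unit of weight on
`U i` costs `w i`. The value is `0` if there is no fractional cover. -/
noncomputable def fractionalCoverCost (U : ι → Set α) (w : ι → ℝ) (f : α → ℝ) : ℝ :=
  ⨅ c : fractionalCovers U f, Finsupp.linearCombination ℝ≥0 w c

lemma linearCombination_nnreal_nonneg {w : ι → ℝ} (hw : 0 ≤ w) (c : ι →₀ ℝ≥0) :
    0 ≤ Finsupp.linearCombination ℝ≥0 w c :=
  Finset.sum_nonneg fun i _ => smul_nonneg zero_le (hw i)

open Classical in
lemma linearCombination_indicator_apply (U : ι → Set α) (c : ι →₀ ℝ≥0) (x : α) :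
    Finsupp.linearCombination ℝ≥0 (fun i => (U i).indicator (1 : α → ℝ)) c x =
      ∑ i ∈ c.support with x ∈ U i, (c i : ℝ) := by
  simp only [Finsupp.linearCombination_apply, Finsupp.sum, Finset.sum_apply, Pi.smul_apply,
    indicator_apply, Pi.one_apply, NNReal.smul_def, smul_eq_mul, mul_ite, mul_one, mul_zero,
    Finset.sum_filter]

variable {U : ι → Set α} {w : ι → ℝ} {f g : α → ℝ}

lemma zero_mem_fractionalCovers (hf : f ≤ 0) : 0 ∈ fractionalCovers U f := by
  simpa only [fractionalCovers, mem_ofPred_eq, map_zero] using hf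

lemma single_mem_fractionalCovers {i : ι} (hf : f ≤ (U i).indicator 1) :
    Finsupp.single i 1 ∈ fractionalCovers U f := by
  simpa only [fractionalCovers, mem_ofPred_eq, Finsupp.linearCombination_single, one_smul] using hf

lemma add_mem_fractionalCovers {c d : ι →₀ ℝ≥0} (hc : c ∈ fractionalCovers U f)
    (hd : d ∈ fractionalCovers U g) : c + d ∈ fractionalCovers U (f + g) := by
  simpa only [fractionalCovers, mem_ofPred_eq, map_add] using add_le_add hc hd

lemma smul_mem_fractionalCovers (t : ℝ≥0) {c : ι →₀ ℝ≥0} (hc : c ∈ fractionalCovers U f) :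
    t • c ∈ fractionalCovers U (t • f) := by
  simpa only [fractionalCovers, mem_ofPred_eq, map_smul] using
    smul_le_smul_of_nonneg_left hc zero_le

lemma fractionalCovers_nonempty {F : Finset ι} (hF : ∀ x, ∃ i ∈ F, x ∈ U i)
    (hf : BddAbove (range f)) : (fractionalCovers U f).Nonempty := by
  obtain ⟨M, hM⟩ := hf
  refine ⟨∑ i ∈ F, Finsupp.single i M.toNNReal, fun x => ?_⟩
  obtain ⟨i, hi, hxi⟩ := hF x
  rw [map_sum, Finset.sum_apply]
  simp only [Finsupp.linearCombination_single, Pi.smul_apply, NNReal.smul_def, smul_eq_mul]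
  calc f x ≤ M := hM (mem_range_self x)
    _ ≤ M.toNNReal * (U i).indicator (1 : α → ℝ) x := by simp [hxi]
    _ ≤ ∑ j ∈ F, M.toNNReal * (U j).indicator (1 : α → ℝ) x :=
      Finset.single_le_sum (f := fun j => (M.toNNReal : ℝ) * (U j).indicator 1 x)
        (fun j _ => mul_nonneg M.toNNReal.coe_nonneg
          (indicator_nonneg (fun _ _ => zero_le_one) x)) hi

lemma fractionalCoverCost_le (hw : 0 ≤ w) {c : ι →₀ ℝ≥0} (hc : c ∈ fractionalCovers U f) :
    fractionalCoverCost U w f ≤ Finsupp.linearCombination ℝ≥0 w c :=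
  ciInf_le (f := fun c : fractionalCovers U f => Finsupp.linearCombination ℝ≥0 w c)
    ⟨0, forall_mem_range.2 fun c => linearCombination_nnreal_nonneg hw c⟩ ⟨c, hc⟩

lemma fractionalCoverCost_add_le (hw : 0 ≤ w) (hf : (fractionalCovers U f).Nonempty)
    (hg : (fractionalCovers U g).Nonempty) :
    fractionalCoverCost U w (f + g) ≤ fractionalCoverCost U w f + fractionalCoverCost U w g :=
  have := hf.to_subtype
  have := hg.to_subtype
  le_ciInf_add_ciInf fun c d =>
    (fractionalCoverCost_le hw (add_mem_fractionalCovers c.2 d.2)).trans_eq (map_add _ _ _)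

lemma fractionalCoverCost_smul {t : ℝ} (ht : 0 < t) (f : α → ℝ) :
    fractionalCoverCost U w (t • f) = t * fractionalCoverCost U w f := by
  lift t to ℝ≥0 using ht.le
  have ht' : t ≠ 0 := by exact_mod_cast ht.ne'
  let e : fractionalCovers U f → fractionalCovers U ((t : ℝ) • f) := fun c =>
    ⟨t • (c : ι →₀ ℝ≥0), smul_mem_fractionalCovers t c.2⟩
  have he : Function.Surjective e := fun d =>
    ⟨⟨t⁻¹ • (d : ι →₀ ℝ≥0), by
        simpa only [← NNReal.smul_def, inv_smul_smul₀ ht'] using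
          smul_mem_fractionalCovers t⁻¹ d.2⟩,
      Subtype.ext (smul_inv_smul₀ ht' _)⟩
  rw [fractionalCoverCost, fractionalCoverCost, Real.mul_iInf_of_nonneg t.coe_nonneg]
  exact (he.iInf_congr _ fun c => by simp [e, NNReal.smul_def]).symm

end FractionalCover

section Frostman

lemma exists_linearMap_eq_le_of_sublinear {E : Type*} [AddCommGroup E] [Module ℝ E] (p : E → ℝ)
    (hsmul : ∀ t : ℝ, 0 < t → ∀ f, p (t • f) = t * p f) (hadd : ∀ f g, p (f + g) ≤ p f + p g)
    (e : E) : ∃ L : E →ₗ[ℝ] ℝ, L e = p e ∧ ∀ f, L f ≤ p f := by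
  have hzero : p 0 = 0 := by
    have := hsmul 2 two_pos 0
    rw [smul_zero] at this
    linarith
  have hwd : ∀ t : ℝ, t • e = 0 → RingHom.id ℝ t • p e = 0 := by
    intro t ht
    rcases smul_eq_zero.1 ht with rfl | rfl <;> simp [hzero]
  have hle : ∀ t : ℝ, t * p e ≤ p (t • e) := by
    intro t
    rcases lt_trichotomy t 0 with ht | rfl | ht
    · have h := hadd (t • e) (-t • e)
      rw [← add_smul, add_neg_cancel, zero_smul, hzero, hsmul (-t) (neg_pos.2 ht)] at h
      linarith
    · simp [hzero]
    · exact (hsmul t ht e).ge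
  obtain ⟨L, hL, hLp⟩ := exists_extension_of_le_sublinear
    (LinearPMap.mkSpanSingleton' e (p e) hwd) p hsmul hadd (by
      rintro ⟨y, hy⟩
      obtain ⟨t, rfl⟩ := Submodule.mem_span_singleton.1 hy
      rw [LinearPMap.mkSpanSingleton'_apply]
      exact hle t)
  exact ⟨L, (hL ⟨e, Submodule.mem_span_singleton_self e⟩).trans
    (LinearPMap.mkSpanSingleton'_apply_self e (p e) hwd _), hLp⟩

lemma exists_positiveLinearMap_eq_le_of_sublinear {E : Type*} [AddCommGroup E] [PartialOrder E]
    [IsOrderedAddMonoid E] [Module ℝ E] (p : E → ℝ)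
    (hsmul : ∀ t : ℝ, 0 < t → ∀ f, p (t • f) = t * p f) (hadd : ∀ f g, p (f + g) ≤ p f + p g)
    (hnonpos : ∀ f ≤ 0, p f ≤ 0) (e : E) : ∃ Λ : E →ₚ[ℝ] ℝ, Λ e = p e ∧ ∀ f, Λ f ≤ p f := by
  obtain ⟨L, hLe, hL⟩ := exists_linearMap_eq_le_of_sublinear p hsmul hadd e
  have hL_nonneg : ∀ f, 0 ≤ f → 0 ≤ L f := fun f hf => by
    simpa only [map_neg, neg_nonpos] using (hL (-f)).trans (hnonpos (-f) (neg_nonpos.2 hf))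
  exact ⟨PositiveLinearMap.mk₀ L hL_nonneg, hLe, hL⟩

open CompactlySupported

variable {Y ι : Type*} [TopologicalSpace Y] [CompactSpace Y] {U : ι → Set Y} {w : ι → ℝ}

lemma fractionalCovers_nonempty_of_compactSpace (hU : ∀ i, IsOpen (U i)) (hcov : ⋃ i, U i = univ)
    {f : Y → ℝ} (hf : Continuous f) : (fractionalCovers U f).Nonempty := by
  obtain ⟨F, hF⟩ := isCompact_univ.elim_finite_subcover U hU hcov.ge
  exact fractionalCovers_nonempty (F := F) (fun x => by simpa using hF (mem_univ x))
    (isCompact_range hf).bddAbove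

lemma exists_positiveLinearMap_le_fractionalCoverCost (hU : ∀ i, IsOpen (U i))
    (hcov : ⋃ i, U i = univ) (hw : 0 ≤ w) :
    ∃ Λ : C_c(Y, ℝ) →ₚ[ℝ] ℝ,
      Λ (CompactlySupportedContinuousMap.continuousMapEquiv 1) = fractionalCoverCost U w 1 ∧
      ∀ f, Λ f ≤ fractionalCoverCost U w f := by
  have hne : ∀ f : C_c(Y, ℝ), (fractionalCovers U f).Nonempty := fun f =>
    fractionalCovers_nonempty_of_compactSpace hU hcov (map_continuous f)
  refine exists_positiveLinearMap_eq_le_of_sublinear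
    (fun f : C_c(Y, ℝ) => fractionalCoverCost U w f) (fun t ht f => ?_) (fun f g => ?_)
    (fun f hf => ?_) (CompactlySupportedContinuousMap.continuousMapEquiv 1)
  · rw [CompactlySupportedContinuousMap.coe_smul, fractionalCoverCost_smul ht]
  · rw [CompactlySupportedContinuousMap.coe_add]
    exact fractionalCoverCost_add_le hw (hne f) (hne g)
  · simpa only [map_zero] using fractionalCoverCost_le hw (zero_mem_fractionalCovers hf)

/-- Linear programming duality for fractional covers. -/
theorem exists_measure_univ_eq_fractionalCoverCost [T2Space Y] [MeasurableSpace Y] [BorelSpace Y]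
    (hU : ∀ i, IsOpen (U i)) (hcov : ⋃ i, U i = univ) (hw : 0 ≤ w) :
    ∃ μ : Measure Y, μ univ = ENNReal.ofReal (fractionalCoverCost U w 1) ∧
      ∀ i, μ (U i) ≤ ENNReal.ofReal (w i) := by
  obtain ⟨Λ, hΛ1, hΛ⟩ := exists_positiveLinearMap_le_fractionalCoverCost hU hcov hw
  refine ⟨RealRMK.rieszMeasure Λ, ?_, fun i => ?_⟩
  · have hmass : (RealRMK.rieszMeasure Λ).real univ = fractionalCoverCost U w 1 := by
      simpa [hΛ1] using RealRMK.integral_rieszMeasure Λ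
        (CompactlySupportedContinuousMap.continuousMapEquiv 1)
    rw [← hmass, ofReal_measureReal]
  · rw [(hU i).measure_eq_iSup_isCompact]
    refine iSup₂_le fun C hCU => iSup_le fun hC => ?_
    obtain ⟨g, hg1, hg0, -, hg01⟩ := exists_continuous_one_zero_of_isCompact hC
      (hU i).isClosed_compl (disjoint_compl_right_iff_subset.2 hCU)
    have hgU : (g : Y → ℝ) ≤ (U i).indicator 1 := by
      intro x
      by_cases hx : x ∈ U i
      · simpa only [indicator_of_mem hx] using! (hg01 x).2
      · simpa only [indicator_of_notMem hx] using! (hg0 hx).le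
    let f : C_c(Y, ℝ) := CompactlySupportedContinuousMap.continuousMapEquiv g
    calc RealRMK.rieszMeasure Λ C
        ≤ ENNReal.ofReal (Λ f) :=
          RealRMK.rieszMeasure_le_of_eq_one Λ (fun x => (hg01 x).1) hC hg1
      _ ≤ ENNReal.ofReal (w i) := ENNReal.ofReal_le_ofReal <| (hΛ f).trans <| by
          simpa using! fractionalCoverCost_le hw (single_mem_fractionalCovers hgU)

theorem exists_isProbabilityMeasure_le_inv_fractionalCoverCost_mul [T2Space Y] [MeasurableSpace Y]
    [BorelSpace Y] (hU : ∀ i, IsOpen (U i)) (hcov : ⋃ i, U i = univ) (hw : 0 ≤ w)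
    (hpos : 0 < fractionalCoverCost U w 1) :
    ∃ μ : Measure Y, IsProbabilityMeasure μ ∧
      ∀ i, μ (U i) ≤ ENNReal.ofReal ((fractionalCoverCost U w 1)⁻¹ * w i) := by
  obtain ⟨μ, hμ, hμU⟩ := exists_measure_univ_eq_fractionalCoverCost hU hcov hw
  refine ⟨(μ univ)⁻¹ • μ, ⟨?_⟩, fun i => ?_⟩
  · rw [Measure.smul_apply, smul_eq_mul, ENNReal.inv_mul_cancel] <;> simp [hμ, hpos]
  · rw [Measure.smul_apply, smul_eq_mul, hμ, ENNReal.ofReal_mul (inv_nonneg.2 hpos.le),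
      ENNReal.ofReal_inv_of_pos hpos]
    gcongr
    exact hμU i

end Frostman

section BowenBall

variable {X : Type*} [MetricSpace X] {T : X → X}

lemma isOpen_bowenBall (hT : Continuous T) (x : X) (n : ℕ) (ε : ℝ) :
    IsOpen (bowenBall T x n ε) := by
  have h : bowenBall T x n ε = ⋂ k ∈ Iio n, {y | dist (T^[k] x) (T^[k] y) < ε} := by
    ext y
    simp [bowenBall]
  rw [h]
  exact (finite_Iio n).isOpen_biInter fun k _ =>
    isOpen_lt (continuous_const.dist (hT.iterate k)) continuous_const

lemma mem_bowenBall_self (x : X) (n : ℕ) {ε : ℝ} (hε : 0 < ε) : x ∈ bowenBall T x n ε :=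
  fun k _ => by rwa [dist_self]

lemma bowenBall_subset_bowenBall (x : X) (n : ℕ) {ε ε' : ℝ} (h : ε ≤ ε') :
    bowenBall T x n ε ⊆ bowenBall T x n ε' :=
  fun _ hy k hk => (hy k hk).trans_le h

lemma bowenBall_subset_bowenBall_two_mul {x y : X} {n : ℕ} {ε : ℝ} (hy : y ∈ bowenBall T x n ε) :
    bowenBall T x n ε ⊆ bowenBall T y n (2 * ε) := fun z hz k hk =>
  calc dist (T^[k] y) (T^[k] z)
      ≤ dist (T^[k] x) (T^[k] y) + dist (T^[k] x) (T^[k] z) := dist_triangle_left _ _ _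
    _ < ε + ε := add_lt_add (hy k hk) (hz k hk)
    _ = 2 * ε := (two_mul ε).symm

end BowenBall

section BowenEntropy

variable {X : Type*} [MetricSpace X] {T : X → X} {s s' ε : ℝ} {N : ℕ} {Z : Set X}

lemma Mpre_le_tsum [Nonempty X] {ι : Type*} [Countable ι] (x : ι → X) (n : ι → ℕ)
    (hn : ∀ i, N ≤ n i) (hZ : Z ⊆ ⋃ i, bowenBall T (x i) (n i) ε) :
    Mpre T s N ε Z ≤ ∑' i, ENNReal.ofReal (Real.exp (-s * n i)) := by
  obtain ⟨e, he⟩ := exists_injective_nat ι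
  let x' : ℕ → X := Function.extend e x fun _ => Classical.arbitrary X
  let n' : ℕ → ℕ := Function.extend e n 0
  have hx' : ∀ i, x' (e i) = x i := he.extend_apply _ _
  have hn' : ∀ i, n' (e i) = n i := he.extend_apply _ _
  calc Mpre T s N ε Z
      ≤ ∑' j : range e, ENNReal.ofReal (Real.exp (-s * n' j)) := by
        refine iInf_le_of_le (range e) <| iInf_le_of_le x' <| iInf_le_of_le n' <|
          iInf_le_of_le ?_ <| iInf_le_of_le ?_ le_rfl
        · simpa only [forall_mem_range, hn'] using hn
        · simpa only [biUnion_range, hx', hn'] using hZ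
    _ = ∑' i, ENNReal.ofReal (Real.exp (-s * n i)) := by
        rw [tsum_range (fun j => ENNReal.ofReal (Real.exp (-s * n' j))) he]
        simp only [hn']

lemma exp_mul_Mpre_le (h : s' ≤ s) {N' : ℕ} (hN : N ≤ N') :
    ENNReal.ofReal (Real.exp ((s - s') * N')) * Mpre T s N ε Z ≤ Mpre T s' N' ε Z := by
  refine le_iInf fun I => le_iInf fun x => le_iInf fun n => le_iInf fun hn => le_iInf fun hc => ?_
  have hM : Mpre T s N ε Z ≤ ∑' i : I, ENNReal.ofReal (Real.exp (-s * n i)) :=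
    iInf_le_of_le I <| iInf_le_of_le x <| iInf_le_of_le n <|
      iInf_le_of_le (fun i hi => hN.trans (hn i hi)) <| iInf_le_of_le hc le_rfl
  refine (mul_le_mul_right hM _).trans ?_
  rw [← ENNReal.tsum_mul_left]
  refine ENNReal.tsum_le_tsum fun i => ?_
  rw [← ENNReal.ofReal_mul (Real.exp_nonneg _), ← Real.exp_add]
  refine ENNReal.ofReal_le_ofReal (Real.exp_le_exp.2 ?_)
  have hni : (N' : ℝ) ≤ n i := by exact_mod_cast hn i i.2
  nlinarith

lemma Mpre_mono {N' : ℕ} (hN : N ≤ N') : Mpre T s N ε Z ≤ Mpre T s N' ε Z := by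
  simpa using exp_mul_Mpre_le (T := T) (ε := ε) (Z := Z) le_rfl hN

lemma MpreEps_eq_top_of_lt (h : s' < s) (hM : Mpre T s N ε Z ≠ 0) : MpreEps T s' ε Z = ∞ := by
  have hexp : Tendsto (fun n : ℕ => ENNReal.ofReal (Real.exp ((s - s') * n))) atTop (𝓝 ∞) :=
    ENNReal.tendsto_ofReal_atTop.comp <| Real.tendsto_exp_atTop.comp <|
      tendsto_natCast_atTop_atTop.const_mul_atTop (sub_pos.2 h)
  have hlim : Tendsto (fun n : ℕ => ENNReal.ofReal (Real.exp ((s - s') * n)) * Mpre T s N ε Z)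
      atTop (𝓝 ∞) := by
    simpa only [ENNReal.top_mul hM] using
      ENNReal.Tendsto.mul_const (b := Mpre T s N ε Z) hexp (.inl ENNReal.top_ne_zero)
  refine top_unique (le_of_tendsto hlim ?_)
  filter_upwards [eventually_ge_atTop N] with n hn
  exact (exp_mul_Mpre_le h.le hn).trans (le_iSup (fun n => Mpre T s' n ε Z) n)

lemma ofReal_le_bowenEntropy (hε : 0 < ε) (hM : Mpre T s N ε Z ≠ 0) :
    ENNReal.ofReal s ≤ bowenEntropy T Z := by
  have hlt : ∀ s' < s, ENNReal.ofReal s' ≤ bowenEntropy T Z := fun s' hs' => by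
    have hs'_top : Mtop T s' Z = ∞ := top_unique <| (MpreEps_eq_top_of_lt hs' hM).ge.trans <|
      le_iSup₂ (f := fun (ε : ℝ) (_ : 0 < ε) => MpreEps T s' ε Z) ε hε
    exact le_iSup₂ (f := fun (s : ℝ) (_ : Mtop T s Z = ∞) => ENNReal.ofReal s) s' hs'_top
  exact le_of_tendsto (ENNReal.continuous_ofReal.continuousWithinAt (s := Iio s))
    (eventually_mem_nhdsWithin.mono hlt)

lemma exists_Mpre_ne_zero_of_lt_bowenEntropy {r : ℝ≥0} (hr : r < bowenEntropy T Z) :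
    ∃ s > (r : ℝ), ∃ ε > 0, ∃ N, Mpre T s N ε Z ≠ 0 := by
  simp only [bowenEntropy, lt_iSup_iff] at hr
  obtain ⟨s, hs, hrs⟩ := hr
  have hpos : 0 < Mtop T s Z := hs ▸ ENNReal.zero_lt_top
  simp only [Mtop, MpreEps, lt_iSup_iff] at hpos
  obtain ⟨ε, hε, N, hN⟩ := hpos
  exact ⟨s, by simpa using ENNReal.toReal_lt_of_lt_ofReal hrs, ε, hε, N, hN.ne'⟩

end BowenEntropy

section CoverRounding

open Classical in
/-- The points are chosen greedily: the sets `U i` containing a chosen point have total weight at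
least `a`, and the points left over lie in none of them. -/
lemma exists_finset_card_mul_le_sum {α ι : Type*} (U : ι → Set α) {c : ι → ℝ} (hc : 0 ≤ c)
    {a : ℝ} (ha : 0 < a) (J : Finset ι) (A : Set α) (hA : ∀ x ∈ A, a ≤ ∑ i ∈ J with x ∈ U i, c i) :
    ∃ E : Finset α, E.card * a ≤ ∑ i ∈ J, c i ∧ ∀ x ∈ A, ∃ y ∈ E, ∃ i ∈ J, x ∈ U i ∧ y ∈ U i := by
  induction J using Finset.strongInduction generalizing A with
  | H J ih =>
  obtain rfl | ⟨x, hx⟩ := A.eq_empty_or_nonempty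
  · exact ⟨∅, by simpa using Finset.sum_nonneg fun i _ => hc i, by simp⟩
  have hJ : J.filter (x ∉ U ·) ⊂ J := by
    obtain ⟨i, hi, -⟩ := Finset.exists_ne_zero_of_sum_ne_zero (ha.trans_le (hA x hx)).ne'
    rw [Finset.mem_filter] at hi
    exact Finset.filter_ssubset.2 ⟨i, hi.1, not_not.2 hi.2⟩
  obtain ⟨E, hE, hEA⟩ := ih _ hJ {z ∈ A | ∀ i ∈ J, z ∈ U i → x ∉ U i} fun z hz => by
    have : J.filter (z ∈ U ·) = (J.filter (x ∉ U ·)).filter (z ∈ U ·) := by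
      grind
    exact this ▸ hA z hz.1
  refine ⟨insert x E, ?_, fun z hz => ?_⟩
  · calc ((insert x E).card : ℝ) * a ≤ (E.card + 1) * a := by
          gcongr
          exact_mod_cast Finset.card_insert_le x E
      _ = a + E.card * a := by ring
      _ ≤ ∑ i ∈ J with x ∈ U i, c i + ∑ i ∈ J with x ∉ U i, c i := add_le_add (hA x hx) hE
      _ = ∑ i ∈ J, c i := Finset.sum_filter_add_sum_filter_not J _ c
  · by_cases h : ∀ i ∈ J, z ∈ U i → x ∉ U i
    · obtain ⟨y, hy, i, hi, hzy⟩ := hEA z ⟨hz, h⟩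
      exact ⟨y, Finset.mem_insert_of_mem hy, i, Finset.mem_of_mem_filter i hi, hzy⟩
    · push Not at h
      obtain ⟨i, hi, hzi, hxi⟩ := h
      exact ⟨x, Finset.mem_insert_self x E, i, hi, hzi, hxi⟩

lemma exists_forall_sum_exp_lt_one {δ : ℝ} (hδ : 0 < δ) :
    ∃ N : ℕ, ∀ G : Finset ℕ, (∀ m ∈ G, N ≤ m) → ∑ m ∈ G, Real.exp (-δ * m) < 1 := by
  have hsum : Summable fun m : ℕ => Real.exp (-δ * m) := by
    simpa only [mul_comm] using Real.summable_exp_nat_mul_iff.2 (neg_lt_zero.2 hδ)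
  obtain ⟨S, hS⟩ := summable_iff_vanishing_norm.1 hsum 1 one_pos
  refine ⟨S.sup id + 1, fun G hG => (le_abs_self _).trans_lt (hS G ?_)⟩
  refine Finset.disjoint_left.2 fun m hm hmS => ?_
  exact (hG m hm).not_gt (Nat.lt_succ_of_le (Finset.le_sup (f := id) hmS))

variable {α ι κ : Type*} {U : ι → Set α} {c : ι →₀ ℝ≥0}

open Classical in
lemma exists_le_sum_of_mem_fractionalCovers [DecidableEq κ] (hc : c ∈ fractionalCovers U 1)
    (n : ι → κ) {a : κ → ℝ} (ha : ∑ m ∈ c.support.image n, a m < 1) (x : α) :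
    ∃ m ∈ c.support.image n,
      a m ≤ ∑ i ∈ c.support.filter (n · = m) with x ∈ U i, (c i : ℝ) := by
  by_contra! h
  refine lt_irrefl (1 : ℝ) ?_
  calc (1 : ℝ) ≤ ∑ i ∈ c.support with x ∈ U i, (c i : ℝ) := by
        simpa only [linearCombination_indicator_apply] using! hc x
    _ = ∑ m ∈ c.support.image n, ∑ i ∈ c.support.filter (n · = m) with x ∈ U i, (c i : ℝ) := by
        simp_rw [Finset.filter_comm (n · = _)]
        exact (Finset.sum_fiberwise_of_maps_to (fun i hi =>
          Finset.mem_image_of_mem n (Finset.mem_of_mem_filter i hi)) _).symm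
    _ ≤ ∑ m ∈ c.support.image n, a m := Finset.sum_le_sum fun m hm => (h m hm).le
    _ < 1 := ha

open Classical in
/-- By pigeonhole, each point is covered with weight at least `a m` at some level `m`, and the
greedy selection applies to the points attached to each level. -/
lemma exists_finset_of_mem_fractionalCovers [DecidableEq κ] (hc : c ∈ fractionalCovers U 1)
    (n : ι → κ) {a : κ → ℝ} (ha_pos : ∀ m, 0 < a m) (ha : ∑ m ∈ c.support.image n, a m < 1) :
    ∃ E : κ → Finset α, (∀ m, (E m).card * a m ≤ ∑ i ∈ c.support with n i = m, (c i : ℝ)) ∧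
      ∀ x, ∃ i ∈ c.support, ∃ y ∈ E (n i), x ∈ U i ∧ y ∈ U i := by
  choose E hE_card hE using fun m : κ => exists_finset_card_mul_le_sum U
    (fun i => (c i).coe_nonneg) (ha_pos m) (c.support.filter (n · = m))
    {x | a m ≤ ∑ i ∈ c.support.filter (n · = m) with x ∈ U i, (c i : ℝ)} fun _ hx => hx
  refine ⟨E, hE_card, fun x => ?_⟩
  obtain ⟨m, -, hxm⟩ := exists_le_sum_of_mem_fractionalCovers hc n ha x
  obtain ⟨y, hy, i, hi, hxi, hyi⟩ := hE m x hxm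
  obtain ⟨hic, rfl⟩ := Finset.mem_filter.1 hi
  exact ⟨i, hic, y, hy, hxi, hyi⟩

variable {s t : ℝ}

lemma sum_sigma_exp_le_linearCombination {β : Type*} (n : ι → ℕ) (E : ℕ → Finset β)
    (hE : ∀ m, (E m).card * Real.exp (-(s - t) * m) ≤ ∑ i ∈ c.support with n i = m, (c i : ℝ)) :
    ∑ q ∈ (c.support.image n).sigma E, Real.exp (-s * q.1) ≤
      Finsupp.linearCombination ℝ≥0 (fun i => Real.exp (-t * n i)) c :=
  calc ∑ q ∈ (c.support.image n).sigma E, Real.exp (-s * q.1)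
      = ∑ m ∈ c.support.image n, (E m).card * Real.exp (-s * m) := by
        simp only [Finset.sum_sigma, Finset.sum_const, nsmul_eq_mul]
    _ = ∑ m ∈ c.support.image n, (E m).card * Real.exp (-(s - t) * m) * Real.exp (-t * m) := by
        refine Finset.sum_congr rfl fun m _ => ?_
        rw [mul_assoc, ← Real.exp_add]
        ring_nf
    _ ≤ ∑ m ∈ c.support.image n,
          (∑ i ∈ c.support with n i = m, (c i : ℝ)) * Real.exp (-t * m) := by
        gcongr with m
        exact hE m
    _ = ∑ m ∈ c.support.image n, ∑ i ∈ c.support with n i = m, c i * Real.exp (-t * n i) := by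
        refine Finset.sum_congr rfl fun m _ => ?_
        rw [Finset.sum_mul]
        exact Finset.sum_congr rfl fun i hi => by rw [(Finset.mem_filter.1 hi).2]
    _ = Finsupp.linearCombination ℝ≥0 (fun i => Real.exp (-t * n i)) c :=
        Finset.sum_fiberwise_of_maps_to (fun i => Finset.mem_image_of_mem n) _

variable {X : Type*} [MetricSpace X] {T : X → X} {ε : ℝ} {N : ℕ} {K : Set X}

lemma Mpre_two_mul_le_linearCombination (hne : K.Nonempty)
    (hN : ∀ G : Finset ℕ, (∀ m ∈ G, N ≤ m) → ∑ m ∈ G, Real.exp (-(s - t) * m) < 1)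
    (x : ι → X) (n : ι → ℕ) (hn : ∀ i, N ≤ n i)
    (hc : c ∈ fractionalCovers (fun i => ((↑) : K → X) ⁻¹' bowenBall T (x i) (n i) ε) 1) :
    Mpre T s N (2 * ε) K ≤
      ENNReal.ofReal (Finsupp.linearCombination ℝ≥0 (fun i => Real.exp (-t * n i)) c) := by
  have hGN : ∀ m ∈ c.support.image n, N ≤ m := by simpa using fun i _ => hn i
  obtain ⟨E, hE_card, hE⟩ := exists_finset_of_mem_fractionalCovers hc n
    (fun m => Real.exp_pos (-(s - t) * m)) (hN _ hGN)
  let P : Finset (Σ _ : ℕ, K) := (c.support.image n).sigma E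
  have hcov : K ⊆ ⋃ q : P, bowenBall T (q.1.2 : X) q.1.1 (2 * ε) := fun z hz => by
    obtain ⟨i, hi, y, hy, hzi, hyi⟩ := hE ⟨z, hz⟩
    exact mem_iUnion.2 ⟨⟨⟨n i, y⟩, Finset.mem_sigma.2 ⟨Finset.mem_image_of_mem n hi, hy⟩⟩,
      bowenBall_subset_bowenBall_two_mul hyi hzi⟩
  have := hne.to_type
  calc Mpre T s N (2 * ε) K
      ≤ ∑' q : P, ENNReal.ofReal (Real.exp (-s * q.1.1)) :=
        Mpre_le_tsum _ _ (fun q => hGN _ (Finset.mem_sigma.1 q.2).1) hcov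
    _ = ENNReal.ofReal (∑ q ∈ P, Real.exp (-s * q.1)) := by
        rw [Finset.tsum_subtype P fun q => ENNReal.ofReal (Real.exp (-s * q.1)),
          ENNReal.ofReal_sum_of_nonneg fun q _ => Real.exp_nonneg _]
    _ ≤ ENNReal.ofReal (Finsupp.linearCombination ℝ≥0 (fun i => Real.exp (-t * n i)) c) :=
        ENNReal.ofReal_le_ofReal (sum_sigma_exp_le_linearCombination n E hE_card)

lemma Mpre_two_mul_le_fractionalCoverCost (hne : K.Nonempty)
    (hN : ∀ G : Finset ℕ, (∀ m ∈ G, N ≤ m) → ∑ m ∈ G, Real.exp (-(s - t) * m) < 1)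
    (x : ι → X) (n : ι → ℕ) (hn : ∀ i, N ≤ n i)
    (hcov : (fractionalCovers
      (fun i => ((↑) : K → X) ⁻¹' bowenBall T (x i) (n i) ε) 1).Nonempty) :
    Mpre T s N (2 * ε) K ≤ ENNReal.ofReal (fractionalCoverCost
      (fun i => ((↑) : K → X) ⁻¹' bowenBall T (x i) (n i) ε)
      (fun i => Real.exp (-t * n i)) 1) := by
  have := hcov.to_subtype
  rw [fractionalCoverCost, ENNReal.ofReal_iInf]
  exact le_iInf fun c => Mpre_two_mul_le_linearCombination hne hN x n hn c.2

end CoverRounding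

section BowenFrostman

variable {X : Type*} [MetricSpace X] [MeasurableSpace X] [BorelSpace X] {T : X → X} {s t ε : ℝ}
  {N : ℕ} {K : Set X}

theorem exists_isProbabilityMeasure_bowenBall_le (hT : Continuous T) (hne : K.Nonempty)
    (hK : IsCompact K) (hε : 0 < ε) (hts : t < s) (hM : Mpre T s N (2 * ε) K ≠ 0) :
    ∃ μ : Measure X, IsProbabilityMeasure μ ∧ μ K = 1 ∧ ∃ C : ℝ, ∃ N₁, ∀ x, ∀ n ≥ N₁,
      μ (bowenBall T x n ε) ≤ ENNReal.ofReal (C * Real.exp (-t * n)) := by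
  have := isCompact_iff_compactSpace.1 hK
  obtain ⟨N₀, hN₀⟩ := exists_forall_sum_exp_lt_one (sub_pos.2 hts)
  let N₁ := max N N₀
  let U : {p : X × ℕ // N₁ ≤ p.2} → Set K := fun p => (↑) ⁻¹' bowenBall T p.1.1 p.1.2 ε
  let w : {p : X × ℕ // N₁ ≤ p.2} → ℝ := fun p => Real.exp (-t * p.1.2)
  have hU : ∀ p, IsOpen (U p) := fun p =>
    (isOpen_bowenBall hT _ _ _).preimage continuous_subtype_val
  have hcov : ⋃ p, U p = univ := iUnion_eq_univ_iff.2 fun x =>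
    ⟨⟨(x, N₁), le_rfl⟩, mem_bowenBall_self (x : X) N₁ hε⟩
  have hcost : 0 < fractionalCoverCost U w 1 := ENNReal.ofReal_pos.1 <|
    (hM.bot_lt.trans_le (Mpre_mono (le_max_left N N₀))).trans_le <|
      Mpre_two_mul_le_fractionalCoverCost hne
        (fun G hG => hN₀ G fun m hm => (le_max_right N N₀).trans (hG m hm)) _ _ (fun p => p.2)
        (fractionalCovers_nonempty_of_compactSpace hU hcov continuous_one)
  obtain ⟨ν, hν, hνU⟩ := exists_isProbabilityMeasure_le_inv_fractionalCoverCost_mul hU hcov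
    (fun p => Real.exp_nonneg _) hcost
  have hval : MeasurableEmbedding ((↑) : K → X) :=
    MeasurableEmbedding.subtype_coe hK.measurableSet
  refine ⟨ν.map (↑), Measure.isProbabilityMeasure_map hval.measurable.aemeasurable, ?_,
    (fractionalCoverCost U w 1)⁻¹, N₁, fun x n hn => ?_⟩
  · rw [hval.map_apply, Subtype.coe_preimage_self, measure_univ]
  · rw [hval.map_apply]
    exact hνU ⟨(x, n), hn⟩

end BowenFrostman

section LocalEntropy

lemma coe_le_negLog_div_iff {m : ℝ≥0∞} (hm : m ≤ 1) {s : ℝ≥0} {n : ℕ} (hn : n ≠ 0) :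
    (s : ℝ≥0∞) ≤ negLog m / n ↔ m ≤ ENNReal.ofReal (Real.exp (-s * n)) := by
  obtain rfl | h0 := eq_or_ne m 0
  · simp [negLog, ENNReal.top_div_of_ne_top]
  lift m to ℝ≥0 using ne_top_of_le_ne_top ENNReal.one_ne_top hm
  have hm_pos : 0 < (m : ℝ) := by exact_mod_cast pos_iff_ne_zero.2 h0
  have hlog : 0 ≤ -Real.log m := neg_nonneg.2 (Real.log_nonpos hm_pos.le (by exact_mod_cast hm))
  rw [ENNReal.le_div_iff_mul_le (by simp [hn]) (by simp), negLog, if_neg h0, ENNReal.coe_toReal,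
    ← ENNReal.ofReal_coe_nnreal, ← ENNReal.ofReal_natCast, ← ENNReal.ofReal_mul s.coe_nonneg,
    ENNReal.ofReal_le_ofReal_iff hlog, le_neg, ← neg_mul, Real.log_le_iff_le_exp hm_pos,
    ← ENNReal.ofReal_coe_nnreal, ENNReal.ofReal_le_ofReal_iff (Real.exp_nonneg _)]

variable {X : Type*} [MetricSpace X] [MeasurableSpace X] {T : X → X} {μ : Measure X} {ε : ℝ}

lemma coe_le_lowerLocalEntropy [IsProbabilityMeasure μ] {x : X} {C : ℝ} {s : ℝ≥0} (hε : 0 < ε)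
    (h : ∀ᶠ n : ℕ in atTop, μ (bowenBall T x n ε) ≤ ENNReal.ofReal (C * Real.exp (-s * n))) :
    s ≤ lowerLocalEntropy T μ x := by
  refine ENNReal.le_of_forall_nnreal_lt fun r hr => ?_
  have hrs : 0 < (s : ℝ) - r := sub_pos.2 (by exact_mod_cast hr)
  have hC : ∀ᶠ n : ℕ in atTop, C ≤ Real.exp ((s - r) * n) :=
    (Real.tendsto_exp_atTop.comp
      (tendsto_natCast_atTop_atTop.const_mul_atTop hrs)).eventually_ge_atTop C
  refine le_trans ?_ (le_iSup₂ (f := fun (ε : ℝ) (_ : 0 < ε) =>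
    liminf (fun n : ℕ => negLog (μ (bowenBall T x n ε)) / n) atTop) ε hε)
  refine le_liminf_of_le (by isBoundedDefault) ?_
  filter_upwards [h, hC, eventually_ne_atTop 0] with n hn hCn hn0
  refine (coe_le_negLog_div_iff prob_le_one hn0).2 (hn.trans (ENNReal.ofReal_le_ofReal ?_))
  calc C * Real.exp (-s * n) ≤ Real.exp ((s - r) * n) * Real.exp (-s * n) := by gcongr
    _ = Real.exp (-r * n) := by
      rw [← Real.exp_add]
      ring_nf

/-- The points all of whose Bowen balls of radius `ε` and length `n ≥ N` have mass at most
`exp (-s n)`: the sets on which the local entropy estimate is uniform, as the mass distribution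
principle requires. -/
def smallBallSet (T : X → X) (μ : Measure X) (s : ℝ) (ε : ℝ) (N : ℕ) : Set X :=
  {x | ∀ n ≥ N, μ (bowenBall T x n ε) ≤ ENNReal.ofReal (Real.exp (-s * n))}

lemma exists_mem_smallBallSet_of_lt_lowerLocalEntropy [IsProbabilityMeasure μ] {x : X} {s : ℝ≥0}
    (hx : s < lowerLocalEntropy T μ x) : ∃ k N : ℕ, x ∈ smallBallSet T μ s (1 / (k + 1)) N := by
  simp only [lowerLocalEntropy, lt_iSup_iff] at hx
  obtain ⟨ε, hε, hx⟩ := hx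
  obtain ⟨k, hk⟩ := exists_nat_one_div_lt hε
  obtain ⟨N, hN⟩ := eventually_atTop.1
    ((eventually_lt_of_lt_liminf hx).and (eventually_ne_atTop 0))
  exact ⟨k, N, fun n hn => (measure_mono (bowenBall_subset_bowenBall x n hk.le)).trans <|
    (coe_le_negLog_div_iff prob_le_one (hN n hn).2).1 (hN n hn).1.le⟩

lemma exists_measure_smallBallSet_ne_zero [IsProbabilityMeasure μ] {s : ℝ≥0}
    (hs : s < lowerEntropy T μ) : ∃ ε > 0, ∃ N, μ (smallBallSet T μ s ε N) ≠ 0 := by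
  by_contra! h
  have hnull : μ (⋃ (k : ℕ) (N : ℕ), smallBallSet T μ s (1 / (k + 1)) N) = 0 :=
    measure_iUnion_null fun k => measure_iUnion_null fun N => h _ Nat.one_div_pos_of_nat N
  have hae : ∀ᵐ x ∂μ, lowerLocalEntropy T μ x ≤ s := by
    refine measure_mono_null (fun x hx => ?_) hnull
    simpa only [mem_iUnion] using exists_mem_smallBallSet_of_lt_lowerLocalEntropy (not_le.1 hx)
  refine hs.not_ge ?_
  calc lowerEntropy T μ ≤ ∫⁻ _, (s : ℝ≥0∞) ∂μ := lintegral_mono_ae hae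
    _ = s := by rw [lintegral_const, measure_univ, mul_one]

theorem measure_smallBallSet_inter_le_Mpre (s ε : ℝ) (N : ℕ) (K : Set X) :
    μ (smallBallSet T μ s (2 * ε) N ∩ K) ≤ Mpre T s N ε K := by
  refine le_iInf fun I => le_iInf fun x => le_iInf fun n => le_iInf fun hn => le_iInf fun hc => ?_
  let A := smallBallSet T μ s (2 * ε) N
  have hball : ∀ i ∈ I, μ (A ∩ bowenBall T (x i) (n i) ε) ≤
      ENNReal.ofReal (Real.exp (-s * n i)) := fun i hi => by
    obtain h | ⟨y, hyA, hy⟩ := (A ∩ bowenBall T (x i) (n i) ε).eq_empty_or_nonempty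
    · simp only [h, measure_empty, zero_le]
    · exact (measure_mono (inter_subset_right.trans
        (bowenBall_subset_bowenBall_two_mul hy))).trans (hyA (n i) (hn i hi))
  calc μ (A ∩ K) ≤ μ (⋃ i : I, A ∩ bowenBall T (x i) (n i) ε) := by
        rw [biUnion_eq_iUnion] at hc
        rw [← inter_iUnion]
        exact measure_mono (inter_subset_inter_right A hc)
    _ ≤ ∑' i : I, μ (A ∩ bowenBall T (x i) (n i) ε) := measure_iUnion_le _
    _ ≤ ∑' i : I, ENNReal.ofReal (Real.exp (-s * n i)) :=
        ENNReal.tsum_le_tsum fun i => hball i i.2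

end LocalEntropy

section VariationalPrinciple

variable {X : Type*} [MetricSpace X] [MeasurableSpace X] {T : X → X} {K : Set X}

theorem lowerEntropy_le_bowenEntropy {μ : Measure X} [IsProbabilityMeasure μ] (hμK : μ Kᶜ = 0) :
    lowerEntropy T μ ≤ bowenEntropy T K := by
  refine ENNReal.le_of_forall_nnreal_lt fun s hs => ?_
  obtain ⟨ε, hε, N, hμ⟩ := exists_measure_smallBallSet_ne_zero hs
  have hM : Mpre T s N (ε / 2) K ≠ 0 := fun h0 => by
    have h := measure_smallBallSet_inter_le_Mpre (T := T) (μ := μ) s (ε / 2) N K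
    rw [mul_div_cancel₀ ε two_ne_zero, measure_inter_conull hμK, h0] at h
    exact hμ (nonpos_iff_eq_zero.1 h)
  simpa only [ENNReal.ofReal_coe_nnreal] using ofReal_le_bowenEntropy (half_pos hε) hM

theorem exists_isProbabilityMeasure_le_lowerEntropy [BorelSpace X] (hT : Continuous T)
    (hne : K.Nonempty) (hK : IsCompact K) {r : ℝ≥0} (hr : r < bowenEntropy T K) :
    ∃ μ : Measure X, IsProbabilityMeasure μ ∧ μ K = 1 ∧ r ≤ lowerEntropy T μ := by
  obtain ⟨s, hrs, ε, hε, N, hM⟩ := exists_Mpre_ne_zero_of_lt_bowenEntropy hr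
  rw [← mul_div_cancel₀ ε two_ne_zero] at hM
  obtain ⟨μ, hμ, hμK, C, N₁, hball⟩ :=
    exists_isProbabilityMeasure_bowenBall_le hT hne hK (half_pos hε) hrs hM
  have hlocal : ∀ x, r ≤ lowerLocalEntropy T μ x := fun x =>
    coe_le_lowerLocalEntropy (half_pos hε) ((eventually_ge_atTop N₁).mono (hball x))
  refine ⟨μ, hμ, hμK, ?_⟩
  calc (r : ℝ≥0∞) = ∫⁻ _, (r : ℝ≥0∞) ∂μ := by rw [lintegral_const, measure_univ, mul_one]
    _ ≤ lowerEntropy T μ := lintegral_mono hlocal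

end VariationalPrinciple

theorem bowenEntropy_eq_iSup_lowerEntropy_general
    {X : Type*} [MetricSpace X] [MeasurableSpace X] [BorelSpace X]
    (T : X → X) (hT : Continuous T) (K : Set X) (hne : K.Nonempty) (hK : IsCompact K) :
    bowenEntropy T K =
      ⨆ (μ : Measure X) (_ : IsProbabilityMeasure μ) (_ : μ K = 1), lowerEntropy T μ := by
  refine le_antisymm (ENNReal.le_of_forall_nnreal_lt fun r hr => ?_)
    (iSup_le fun μ => iSup_le fun _ => iSup_le fun hμK => lowerEntropy_le_bowenEntropy
      ((prob_compl_eq_zero_iff hK.measurableSet).2 hμK))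
  obtain ⟨μ, hμ, hμK, hle⟩ := exists_isProbabilityMeasure_le_lowerEntropy hT hne hK hr
  exact le_iSup_of_le μ <| le_iSup_of_le hμ <| le_iSup_of_le hμK hle

/-- **Variational principle for Bowen topological entropy of compact sets**
(Feng–Huang, Theorem 1.1(i)): for a topological dynamical system `(X,T)` and a non-empty
compact set `K ⊆ X`,
`h^B_top(T,K) = sup { h̲_μ(T) : μ a Borel probability measure on X with μ(K) = 1 }`. -/
theorem bowenEntropy_eq_iSup_lowerEntropy
    {X : Type*} [MetricSpace X] [CompactSpace X] [MeasurableSpace X] [BorelSpace X]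
    (T : X → X) (hT : Continuous T) (K : Set X) (hne : K.Nonempty) (hK : IsCompact K) :
    bowenEntropy T K =
      ⨆ (μ : Measure X) (_ : IsProbabilityMeasure μ) (_ : μ K = 1), lowerEntropy T μ := by
  exact bowenEntropy_eq_iSup_lowerEntropy_general T hT K hne hK
end

section
/- Let (X,T) be a topological dynamical system. For every analytic subset Z ⊆ X, the packing topological entropy of Z equals the supremum of the packing topological entropies of its compact subsets: h^P_top(T,Z) = sup { h^P_top(T,K) : K ⊆ Z, K compact }. -/
/-!
The inequality `≥` is monotonicity. For `≤`, fix `s < t` and `ε' < ε` and suppose that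
`Pouter T t ε Z ≠ 0`, where `Z = range f` for a continuous map `f` on a Polish space.

Deleting from the Polish space the open sets with `Pouter T t ε`-null image leaves a closed set `S`.
Its nonempty relatively open subsets `V` satisfy `PpreEps T t ε (f '' V) ≠ 0`, hence
`PpreEps T s ε (f '' V) = ∞` because `s < t`. A large packing sum is already attained by finitely
many balls, and it survives small perturbations of their centres if the radius is reduced: it is an
open condition for the lower Vietoris topology. Since adding finitely many points close to a compact
set moves it little, Baire's theorem in the space of nonempty compact subsets of `S` shows that a
generic `C` inherits the property of `S`, at a smaller radius: the images of the nonempty relatively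
open subsets of `C` have infinite packing sums.

Finally put `K = f '' C`. If `K` is covered by sets `A i`, then by Baire's theorem in `C` some
`closure (A i)` contains the image of a nonempty relatively open subset of `C`. Passing from
`closure (A i)` to `A i` only costs radius, so `PpreEps T s ε' (A i) = ∞`. Hence
`Pouter T s ε' K = ∞`.
-/

open Filter Set MeasureTheory Topology
open scoped ENNReal NNReal

/-! ### The lower Vietoris topology -/

section LowerVietoris

open TopologicalSpace

variable {Y W : Type*} [TopologicalSpace Y] [TopologicalSpace W]

variable (Y) in
/-- The lower Vietoris topology on the powerset of a topological space, generated by the sets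
`{B | (B ∩ U).Nonempty}` with `U` open. Up to a loss of radius, packing sums are lower
semicontinuous for it, and unlike the full Vietoris topology it makes intersection with a fixed
open set continuous. -/
abbrev lowerVietoris : TopologicalSpace (Set Y) :=
  .generateFrom ((fun U => {B | (B ∩ U).Nonempty}) '' {U | IsOpen U})

namespace lowerVietoris

attribute [local instance] lowerVietoris

lemma isOpen_inter_nonempty {U : Set Y} (hU : IsOpen U) : IsOpen {B : Set Y | (B ∩ U).Nonempty} :=
  isOpen_generateFrom_of_mem ⟨U, hU, rfl⟩

lemma eventually_inter_nonempty {A U : Set Y} {x : Y} (hx : x ∈ A) (hU : U ∈ 𝓝 x) :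
    ∀ᶠ B in 𝓝 A, (B ∩ U).Nonempty := by
  obtain ⟨V, hVU, hV, hxV⟩ := mem_nhds_iff.mp hU
  exact ((isOpen_inter_nonempty hV).eventually_mem ⟨x, hx, hxV⟩).mono
    fun B hB => hB.mono (inter_subset_inter_right B hVU)

lemma continuous_image {f : Y → W} (hf : Continuous f) :
    Continuous fun B : Set Y => f '' B := by
  refine continuous_generateFrom_iff.mpr ?_
  rintro _ ⟨U, hU, rfl⟩
  simpa only [preimage_ofPred_eq, image_inter_nonempty_iff]
    using isOpen_inter_nonempty (hU.preimage hf)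

lemma continuous_inter_left {V : Set Y} (hV : IsOpen V) :
    Continuous fun B : Set Y => V ∩ B := by
  refine continuous_generateFrom_iff.mpr ?_
  rintro _ ⟨U, hU, rfl⟩
  simpa only [preimage_ofPred_eq, inter_comm V, inter_assoc]
    using isOpen_inter_nonempty (hV.inter hU)

lemma continuous_coe : Continuous ((↑) : NonemptyCompacts Y → Set Y) := by
  refine continuous_generateFrom_iff.mpr ?_
  rintro _ ⟨U, hU, rfl⟩
  exact NonemptyCompacts.isOpen_inter_nonempty_of_isOpen hU

lemma specializes_of_subset_closure {A B : Set Y} (h : A ⊆ closure B) : B ⤳ A := by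
  simp only [Specializes, nhds_generateFrom (a := A), le_iInf₂_iff]
  rintro _ ⟨hA, U, hU, rfl⟩
  obtain ⟨x, hxA, hxU⟩ := hA
  obtain ⟨y, hyU, hyB⟩ := mem_closure_iff.mp (h hxA) U hU hxU
  exact le_principal_iff.mpr ((isOpen_inter_nonempty hU).mem_nhds ⟨y, hyB, hyU⟩)

lemma mem_of_subset {𝒪 : Set (Set Y)} (h𝒪 : IsOpen 𝒪) {A B : Set Y} (hA : A ∈ 𝒪) (h : A ⊆ B) :
    B ∈ 𝒪 :=
  (specializes_of_subset_closure (h.trans subset_closure)).mem_open h𝒪 hA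

lemma exists_finite_subset_mem {𝒪 : Set (Set Y)} (h𝒪 : IsOpen 𝒪) {A : Set Y} (hA : A ∈ 𝒪) :
    ∃ F ⊆ A, F.Finite ∧ F ∈ 𝒪 := by
  induction h𝒪 with
  | basic _ h𝒪 =>
    obtain ⟨U, -, rfl⟩ := h𝒪
    obtain ⟨x, hxA, hxU⟩ := hA
    exact ⟨{x}, singleton_subset_iff.mpr hxA, finite_singleton x, x, rfl, hxU⟩
  | univ => exact ⟨∅, empty_subset A, finite_empty, mem_univ _⟩
  | inter 𝒪₁ 𝒪₂ h₁ h₂ ih₁ ih₂ =>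
    obtain ⟨F₁, hF₁A, hF₁, hF₁𝒪⟩ := ih₁ hA.1
    obtain ⟨F₂, hF₂A, hF₂, hF₂𝒪⟩ := ih₂ hA.2
    exact ⟨F₁ ∪ F₂, union_subset hF₁A hF₂A, hF₁.union hF₂,
      mem_of_subset h₁ hF₁𝒪 subset_union_left, mem_of_subset h₂ hF₂𝒪 subset_union_right⟩
  | sUnion 𝒮 _ ih =>
    obtain ⟨𝒪', h𝒪', hA'⟩ := hA
    obtain ⟨F, hFA, hF, hF𝒪⟩ := ih 𝒪' h𝒪' hA'
    exact ⟨F, hFA, hF, 𝒪', h𝒪', hF𝒪⟩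

end lowerVietoris

end LowerVietoris

/-! ### Category arguments -/

section Category

open TopologicalSpace

variable {Y : Type*} [TopologicalSpace Y]

lemma exists_isClosed_forall_isOpen_inter_ne_zero [SecondCountableTopology Y]
    {μ : OuterMeasure Y} (h : μ univ ≠ 0) :
    ∃ S : Set Y, IsClosed S ∧ S.Nonempty ∧
      ∀ V, IsOpen V → (V ∩ S).Nonempty → μ (V ∩ S) ≠ 0 := by
  let N : Set Y := ⋃₀ {V | IsOpen V ∧ μ V = 0}
  have hN_null : μ N = 0 := measure_null_of_locally_null N fun x ⟨V, ⟨hV, hV0⟩, hxV⟩ =>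
    ⟨V, mem_nhdsWithin_of_mem_nhds (hV.mem_nhds hxV), hV0⟩
  refine ⟨Nᶜ, (isOpen_sUnion fun V hV => hV.1).isClosed_compl,
    nonempty_compl.mpr fun hN_univ => h (hN_univ ▸ hN_null), ?_⟩
  rintro V hV ⟨x, hxV, hxN⟩ hVN
  have hV_null : μ V = 0 :=
    measure_mono_null (fun y hyV => or_iff_not_imp_right.mpr fun hyN => ⟨hyV, hyN⟩)
      (measure_union_null hVN hN_null)
  exact hxN ⟨V, ⟨hV, hV_null⟩, hxV⟩

lemma exists_isOpen_superset_forall_le_mem {𝒰 : Set (NonemptyCompacts Y)} (h𝒰 : IsOpen 𝒰)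
    {C : NonemptyCompacts Y} (hC : C ∈ 𝒰) :
    ∃ G : Set Y, IsOpen G ∧ (C : Set Y) ⊆ G ∧
      ∀ D : NonemptyCompacts Y, C ≤ D → (D : Set Y) ⊆ G → D ∈ 𝒰 := by
  obtain ⟨_, ⟨u, ⟨-, -, hu⟩, rfl⟩, ⟨hCu, hCU⟩, hu𝒰⟩ :=
    NonemptyCompacts.isTopologicalBasis.exists_subset_of_mem_open hC h𝒰
  exact ⟨⋃₀ u, isOpen_sUnion hu, hCu, fun D hCD hDu =>
    hu𝒰 ⟨hDu, fun U hU => (hCU U hU).mono (inter_subset_inter_left U hCD)⟩⟩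

attribute [local instance] lowerVietoris

lemma mem_closure_setOfPred_inter_mem {𝒪 : Set (Set Y)} (h𝒪 : IsOpen 𝒪)
    (h : ∀ V, IsOpen V → V.Nonempty → V ∈ 𝒪) {V : Set Y} (hV : IsOpen V)
    {C : NonemptyCompacts Y} (hCV : ((C : Set Y) ∩ V).Nonempty) :
    C ∈ closure {D : NonemptyCompacts Y | V ∩ D ∈ 𝒪} := by
  refine mem_closure_iff.mpr fun 𝒰 h𝒰 hC𝒰 => ?_
  obtain ⟨G, hG, hCG, h_mem⟩ := exists_isOpen_superset_forall_le_mem h𝒰 hC𝒰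
  obtain ⟨x, hxC, hxV⟩ := hCV
  obtain ⟨F, hF, hF_fin, hF𝒪⟩ := lowerVietoris.exists_finite_subset_mem h𝒪
    (h (V ∩ G) (hV.inter hG) ⟨x, hxV, hCG hxC⟩)
  let D : NonemptyCompacts Y :=
    ⟨⟨C ∪ F, C.isCompact.union hF_fin.isCompact⟩, C.nonempty.mono subset_union_left⟩
  have hCD : C ≤ D := subset_union_left (s := (C : Set Y)) (t := F)
  have hFD : F ⊆ V ∩ D := fun y hy => ⟨(hF hy).1, Or.inr hy⟩
  exact ⟨D, h_mem D hCD (union_subset hCG fun y hy => (hF hy).2),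
    lowerVietoris.mem_of_subset h𝒪 hF𝒪 hFD⟩

lemma exists_nonemptyCompacts_forall_inter_mem [SecondCountableTopology Y]
    [BaireSpace (NonemptyCompacts Y)] [Nonempty Y] {ι : Type*} [Countable ι]
    {𝒪 : ι → Set (Set Y)} (h𝒪 : ∀ i, IsOpen (𝒪 i))
    (h : ∀ i V, IsOpen V → V.Nonempty → V ∈ 𝒪 i) :
    ∃ C : NonemptyCompacts Y, ∀ i V, IsOpen V → ((C : Set Y) ∩ V).Nonempty → V ∩ C ∈ 𝒪 i := by
  let hits (V : Set Y) : Set (NonemptyCompacts Y) := {C | ((C : Set Y) ∩ V).Nonempty}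
  let good (i : ι) (V : Set Y) : Set (NonemptyCompacts Y) := {C | V ∩ C ∈ 𝒪 i}
  have good_isOpen (p : ι × countableBasis Y) : IsOpen (good p.1 p.2) :=
    (h𝒪 p.1).preimage ((lowerVietoris.continuous_inter_left
      (isOpen_of_mem_countableBasis p.2.2)).comp lowerVietoris.continuous_coe)
  have hits_subset (p : ι × countableBasis Y) : hits p.2 ⊆ closure (good p.1 p.2) :=
    fun _ hC => mem_closure_setOfPred_inter_mem (h𝒪 p.1) (h p.1)
      (isOpen_of_mem_countableBasis p.2.2) hC
  have good_dense (p : ι × countableBasis Y) :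
      Dense (good p.1 p.2 ∪ (closure (hits p.2))ᶜ) := by
    intro C
    by_cases hC : C ∈ closure (hits p.2)
    · exact closure_mono subset_union_left (closure_minimal (hits_subset p) isClosed_closure hC)
    · exact subset_closure (Or.inr hC)
  have : Countable (countableBasis Y) := (countable_countableBasis Y).to_subtype
  obtain ⟨C, hC⟩ := (dense_iInter_of_isOpen
    (fun p => (good_isOpen p).union isClosed_closure.isOpen_compl) good_dense).nonempty
  refine ⟨C, fun i V hV ⟨x, hxC, hxV⟩ => ?_⟩
  obtain ⟨B, hB, hxB, hBV⟩ := (isBasis_countableBasis Y).exists_subset_of_mem_open hxV hV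
  have hCB : B ∩ C ∈ 𝒪 i := (mem_iInter.mp hC (i, ⟨B, hB⟩)).resolve_right
    (notMem_compl_iff.mpr (subset_closure ⟨x, hxC, hxB⟩))
  exact lowerVietoris.mem_of_subset (h𝒪 i) hCB (inter_subset_inter_left _ hBV)

lemma exists_isOpen_inter_subset_closure {C : Set Y} [BaireSpace C] (hC : C.Nonempty)
    {ι : Type*} [Countable ι] {A : ι → Set Y} (h : C ⊆ ⋃ i, A i) :
    ∃ i V, IsOpen V ∧ (C ∩ V).Nonempty ∧ V ∩ C ⊆ closure (A i) := by
  have : Nonempty C := hC.to_subtype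
  obtain ⟨i, c, hc⟩ := nonempty_interior_of_iUnion_of_closed
    (f := fun i => ((↑) : C → Y) ⁻¹' closure (A i))
    (fun i => isClosed_closure.preimage continuous_subtype_val)
    (eq_univ_of_forall fun c => by
      obtain ⟨i, hi⟩ := mem_iUnion.mp (h c.2)
      exact mem_iUnion.mpr ⟨i, subset_closure hi⟩)
  obtain ⟨U, hU, hU_open, hcU⟩ := mem_interior.mp hc
  obtain ⟨V, hV, rfl⟩ := isOpen_induced_iff.mp hU_open
  exact ⟨i, V, hV, ⟨c, c.2, hcU⟩, fun y hy => hU (show (⟨y, hy.2⟩ : C) ∈ _ from hy.1)⟩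

instance baireSpace_nonemptyCompacts [IsCompletelyMetrizableSpace Y] :
    BaireSpace (NonemptyCompacts Y) := by
  let _ := upgradeIsCompletelyMetrizable Y
  infer_instance

end Category

/-! ### Packing sums -/

section Packing

variable {X : Type*} [MetricSpace X] {T : X → X}

attribute [local instance] lowerVietoris

lemma lt_Ppre_iff {s : ℝ} {N : ℕ} {ε : ℝ} {A : Set X} {M : ℝ≥0∞} :
    M < Ppre T s N ε A ↔ ∃ (F : Finset ℕ) (x : ℕ → X) (n : ℕ → ℕ),
      (∀ i ∈ F, x i ∈ A ∧ N ≤ n i) ∧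
      (F : Set ℕ).PairwiseDisjoint (fun i => bowenClosedBall T (x i) (n i) ε) ∧
      M < ∑ i ∈ F, ENNReal.ofReal (Real.exp (-s * n i)) := by
  simp only [Ppre, lt_iSup_iff]
  constructor
  · rintro ⟨I, x, n, hx, h_disj, hM⟩
    rw [ENNReal.tsum_eq_iSup_sum, lt_iSup_iff] at hM
    obtain ⟨G, hG⟩ := hM
    have hGI : ∀ i ∈ G.map (Function.Embedding.subtype (· ∈ I)), i ∈ I :=
      fun i hi => Finset.property_of_mem_map_subtype G hi
    exact ⟨G.map (Function.Embedding.subtype (· ∈ I)), x, n, fun i hi => hx i (hGI i hi),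
      fun i hi j hj => h_disj i (hGI i hi) j (hGI j hj), by rwa [Finset.sum_map]⟩
  · rintro ⟨F, x, n, hx, h_disj, hM⟩
    refine ⟨F, x, n, hx, fun i hi j hj => h_disj hi hj, ?_⟩
    exact hM.trans_eq
      (Finset.tsum_subtype' F fun i => ENNReal.ofReal (Real.exp (-s * n i))).symm

lemma Ppre_mono (s ε : ℝ) {N N' : ℕ} (hN : N' ≤ N) {A B : Set X} (hAB : A ⊆ B) :
    Ppre T s N ε A ≤ Ppre T s N' ε B := by
  refine le_of_forall_lt fun M hM => ?_
  obtain ⟨F, x, n, hx, h_disj, hF⟩ := lt_Ppre_iff.mp hM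
  exact lt_Ppre_iff.mpr
    ⟨F, x, n, fun i hi => ⟨hAB (hx i hi).1, hN.trans (hx i hi).2⟩, h_disj, hF⟩

lemma PpreEps_mono (s ε : ℝ) {A B : Set X} (h : A ⊆ B) : PpreEps T s ε A ≤ PpreEps T s ε B :=
  iInf_mono fun _ => Ppre_mono s ε le_rfl h

lemma PpreEps_empty (s ε : ℝ) : PpreEps T s ε (∅ : Set X) = 0 := by
  refine le_antisymm ((iInf_le _ 0).trans (le_of_forall_lt fun M hM => ?_)) bot_le
  obtain ⟨F, x, n, hx, -, hF⟩ := lt_Ppre_iff.mp hM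
  rwa [Finset.eq_empty_of_forall_notMem fun i hi => (hx i hi).1, Finset.sum_empty] at hF

lemma eventually_bowenClosedBall_subset (hT : Continuous T) (x : X) (n : ℕ) {ε ε' : ℝ}
    (hε : ε' < ε) :
    ∀ᶠ y in 𝓝 x, bowenClosedBall T y n ε' ⊆ bowenClosedBall T x n ε := by
  have h_near : ∀ᶠ y in 𝓝 x, ∀ k ∈ Finset.range n, dist (T^[k] x) (T^[k] y) < ε - ε' := by
    refine (Finset.eventually_all _).mpr fun k _ => ?_
    have h_cont : Continuous fun y => dist (T^[k] x) (T^[k] y) :=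
      continuous_const.dist (hT.iterate k)
    exact h_cont.continuousAt.eventually_lt_const (by simpa using hε)
  filter_upwards [h_near] with y hy z hz k hk
  linarith [dist_triangle (T^[k] x) (T^[k] y) (T^[k] z), hy k (Finset.mem_range.mpr hk), hz k hk]

lemma eventually_lt_Ppre (hT : Continuous T) {s : ℝ} {N : ℕ} {ε ε' : ℝ} (hε : ε' < ε)
    {A : Set X} {M : ℝ≥0∞} (h : M < Ppre T s N ε A) :
    ∀ᶠ B in 𝓝 A, M < Ppre T s N ε' B := by
  obtain ⟨F, x, n, hx, h_disj, hM⟩ := lt_Ppre_iff.mp h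
  have h_perturb : ∀ᶠ B in 𝓝 A, ∀ i ∈ F, ∃ y ∈ B,
      bowenClosedBall T y (n i) ε' ⊆ bowenClosedBall T (x i) (n i) ε :=
    (Finset.eventually_all F).mpr fun i hi => lowerVietoris.eventually_inter_nonempty
      (hx i hi).1 (eventually_bowenClosedBall_subset hT (x i) (n i) hε)
  have : Nonempty X := ⟨x 0⟩
  filter_upwards [h_perturb] with B hB
  choose! y hyB hy_ball using hB
  exact lt_Ppre_iff.mpr ⟨F, y, n, fun i hi => ⟨hyB i hi, (hx i hi).2⟩,
    fun i hi j hj hij => (h_disj hi hj hij).mono (hy_ball i hi) (hy_ball j hj), hM⟩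

lemma PpreEps_closure_le (hT : Continuous T) (s : ℝ) {ε ε' : ℝ} (hε : ε' < ε) (A : Set X) :
    PpreEps T s ε (closure A) ≤ PpreEps T s ε' A :=
  iInf_mono fun _ => le_of_forall_lt fun _ hM =>
    ((eventually_lt_Ppre hT hε hM).filter_mono
      (lowerVietoris.specializes_of_subset_closure subset_rfl)).self_of_nhds

lemma exp_mul_Ppre_le {s t : ℝ} (hst : s ≤ t) (N : ℕ) (ε : ℝ) (A : Set X) :
    ENNReal.ofReal (Real.exp ((t - s) * N)) * Ppre T t N ε A ≤ Ppre T s N ε A := by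
  simp only [Ppre, ENNReal.mul_iSup, ← ENNReal.tsum_mul_left]
  gcongr with I x n hx _ i
  rw [← ENNReal.ofReal_mul (Real.exp_nonneg _), ← Real.exp_add]
  have hN : (N : ℝ) ≤ n i := by exact_mod_cast (hx i i.2).2
  gcongr
  linarith [mul_le_mul_of_nonneg_left hN (sub_nonneg.mpr hst)]

lemma PpreEps_eq_top_of_lt {s t ε : ℝ} (hst : s < t) {A : Set X} (h : PpreEps T t ε A ≠ 0) :
    PpreEps T s ε A = ∞ := by
  refine iInf_eq_top.mpr fun N => top_le_iff.mp ?_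
  have h_exp : Tendsto (fun L : ℕ => ENNReal.ofReal (Real.exp ((t - s) * L))) atTop (𝓝 ∞) :=
    ENNReal.tendsto_ofReal_atTop.comp (Real.tendsto_exp_atTop.comp
      (tendsto_natCast_atTop_atTop.const_mul_atTop (sub_pos.mpr hst)))
  have h_lim := ENNReal.Tendsto.mul_const (b := PpreEps T t ε A) h_exp
    (Or.inl ENNReal.top_ne_zero)
  rw [ENNReal.top_mul h] at h_lim
  refine le_of_tendsto h_lim (eventually_atTop.mpr ⟨N, fun L hL => ?_⟩)
  calc ENNReal.ofReal (Real.exp ((t - s) * L)) * PpreEps T t ε A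
      ≤ ENNReal.ofReal (Real.exp ((t - s) * L)) * Ppre T t L ε A := by
        gcongr; exact iInf_le _ L
    _ ≤ Ppre T s L ε A := exp_mul_Ppre_le hst.le L ε A
    _ ≤ Ppre T s N ε A := Ppre_mono s ε hL subset_rfl

/-- The set function `Pouter T s ε`, bundled as the outer measure generated by `PpreEps T s ε`. -/
noncomputable def packOuterMeasure (T : X → X) (s ε : ℝ) : OuterMeasure X :=
  OuterMeasure.ofFunction (PpreEps T s ε) (PpreEps_empty s ε)

lemma Pouter_mono (s ε : ℝ) {A B : Set X} (h : A ⊆ B) : Pouter T s ε A ≤ Pouter T s ε B :=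
  measure_mono (μ := packOuterMeasure T s ε) h

lemma Pouter_le_PpreEps (s ε : ℝ) (A : Set X) : Pouter T s ε A ≤ PpreEps T s ε A :=
  OuterMeasure.ofFunction_le (m_empty := PpreEps_empty s ε) A

lemma packEntropy_mono {A B : Set X} (h : A ⊆ B) : packEntropy T A ≤ packEntropy T B :=
  iSup₂_mono fun ε _ => iSup_mono fun s => iSup_mono' fun hs =>
    ⟨top_le_iff.mp (hs ▸ Pouter_mono s ε h), le_rfl⟩

end Packing

/-! ### Compact sets of infinite packing measure -/

section Compact

open TopologicalSpace

variable {X Y : Type*} [MetricSpace X] {T : X → X} [TopologicalSpace Y] {f : Y → X}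

attribute [local instance] lowerVietoris

lemma exists_nonemptyCompacts_PpreEps_image_inter_eq_top [SecondCountableTopology Y]
    [BaireSpace (NonemptyCompacts Y)] [Nonempty Y] (hT : Continuous T) (hf : Continuous f)
    {s ε ε' : ℝ} (hε : ε' < ε)
    (h : ∀ V : Set Y, IsOpen V → V.Nonempty → PpreEps T s ε (f '' V) = ∞) :
    ∃ C : NonemptyCompacts Y, ∀ V : Set Y, IsOpen V → ((C : Set Y) ∩ V).Nonempty →
      PpreEps T s ε' (f '' (V ∩ C)) = ∞ := by
  let 𝒪 (p : ℕ × ℕ) : Set (Set Y) :=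
    (f '' ·) ⁻¹' interior {A | (p.2 : ℝ≥0∞) < Ppre T s p.1 ε' A}
  have h_mem (p : ℕ × ℕ) (V : Set Y) (hV : IsOpen V) (hV_ne : V.Nonempty) : V ∈ 𝒪 p := by
    refine mem_interior_iff_mem_nhds.mpr (eventually_lt_Ppre hT hε ?_)
    rw [iInf_eq_top.mp (h V hV hV_ne) p.1]
    exact ENNReal.natCast_lt_top p.2
  obtain ⟨C, hC⟩ := exists_nonemptyCompacts_forall_inter_mem
    (fun p => isOpen_interior.preimage (lowerVietoris.continuous_image hf)) h_mem
  refine ⟨C, fun V hV hCV => iInf_eq_top.mpr fun N => ENNReal.eq_top_of_forall_nnreal_le ?_⟩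
  intro r
  obtain ⟨M, hM⟩ := exists_nat_ge r
  have h_large : (M : ℝ≥0∞) < Ppre T s N ε' (f '' (V ∩ C)) :=
    interior_subset (s := {A | (M : ℝ≥0∞) < Ppre T s N ε' A}) (hC (N, M) V hV hCV)
  exact (ENNReal.coe_le_coe.mpr hM).trans h_large.le

lemma Pouter_image_eq_top {C : Set Y} [BaireSpace C] (hT : Continuous T) (hf : Continuous f)
    {s ε ε' : ℝ} (hε : ε' < ε) (hC : C.Nonempty)
    (h : ∀ V : Set Y, IsOpen V → (C ∩ V).Nonempty → PpreEps T s ε (f '' (V ∩ C)) = ∞) :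
    Pouter T s ε' (f '' C) = ∞ := by
  refine top_le_iff.mp (le_iInf₂ fun A hA => ?_)
  have h_cover : C ⊆ ⋃ i, f ⁻¹' A i := by
    rw [← preimage_iUnion]
    exact image_subset_iff.mp hA
  obtain ⟨i, V, hV, hCV, hVC⟩ := exists_isOpen_inter_subset_closure hC h_cover
  have h_sub : f '' (V ∩ C) ⊆ closure (A i) :=
    image_subset_iff.mpr (hVC.trans (hf.closure_preimage_subset (A i)))
  calc ∞ = PpreEps T s ε (f '' (V ∩ C)) := (h V hV hCV).symm
    _ ≤ PpreEps T s ε (closure (A i)) := PpreEps_mono s ε h_sub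
    _ ≤ PpreEps T s ε' (A i) := PpreEps_closure_le hT s hε (A i)
    _ ≤ ∑' i, PpreEps T s ε' (A i) := ENNReal.le_tsum i

lemma exists_isClosed_PpreEps_image_eq_top [SecondCountableTopology Y] {s t ε : ℝ} (hst : s < t)
    (h : Pouter T t ε (range f) ≠ 0) :
    ∃ S : Set Y, IsClosed S ∧ S.Nonempty ∧
      ∀ V : Set S, IsOpen V → V.Nonempty → PpreEps T s ε ((f ∘ (↑)) '' V) = ∞ := by
  rw [← image_univ] at h
  obtain ⟨S, hS, hS_ne, hS_pos⟩ := exists_isClosed_forall_isOpen_inter_ne_zero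
    (μ := (packOuterMeasure T t ε).comap f) h
  refine ⟨S, hS, hS_ne, fun V hV ⟨y, hyV⟩ => ?_⟩
  obtain ⟨U, hU, rfl⟩ := isOpen_induced_iff.mp hV
  have hU_pos : Pouter T t ε (f '' (U ∩ S)) ≠ 0 := hS_pos U hU ⟨y, hyV, y.2⟩
  rw [image_comp, Subtype.image_preimage_coe, inter_comm]
  exact PpreEps_eq_top_of_lt hst fun h0 =>
    hU_pos (le_antisymm ((Pouter_le_PpreEps t ε _).trans h0.le) bot_le)

lemma exists_isCompact_Pouter_eq_top (hT : Continuous T) {Z : Set X} (hZ : AnalyticSet Z)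
    {s t ε ε' : ℝ} (hst : s < t) (hε : ε' < ε) (h : Pouter T t ε Z ≠ 0) :
    ∃ K ⊆ Z, IsCompact K ∧ Pouter T s ε' K = ∞ := by
  obtain ⟨Y, _, _, g, hg, rfl⟩ := analyticSet_iff_exists_polishSpace_range.mp hZ
  obtain ⟨S, hS, hS_ne, hS_top⟩ := exists_isClosed_PpreEps_image_eq_top hst h
  have : PolishSpace S := hS.polishSpace
  have : Nonempty S := hS_ne.to_subtype
  have hf : Continuous (g ∘ ((↑) : S → Y)) := hg.comp continuous_subtype_val
  obtain ⟨δ, hδ', hδ⟩ := exists_between hε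
  obtain ⟨C, hC⟩ := exists_nonemptyCompacts_PpreEps_image_inter_eq_top hT hf hδ hS_top
  have : CompactSpace (C : Set S) := isCompact_iff_compactSpace.mp C.isCompact
  refine ⟨_, ?_, C.isCompact.image hf, Pouter_image_eq_top hT hf hδ' C.nonempty hC⟩
  exact (image_subset_range _ _).trans (range_comp_subset_range _ _)

lemma packEntropyEps_le_iSup_isCompact (hT : Continuous T) {Z : Set X} (hZ : AnalyticSet Z)
    {ε ε' : ℝ} (hε : ε' < ε) :
    packEntropyEps T ε Z ≤ ⨆ (K : Set X) (_ : K ⊆ Z) (_ : IsCompact K), packEntropyEps T ε' K := by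
  refine iSup₂_le fun t ht => le_of_forall_lt_imp_le_of_dense fun c hc => ?_
  have hct : c.toReal < t := (ENNReal.lt_ofReal_iff_toReal_lt hc.ne_top).mp hc
  obtain ⟨K, hKZ, hK, hK_top⟩ :=
    exists_isCompact_Pouter_eq_top hT hZ hct hε (ht ▸ ENNReal.top_ne_zero)
  calc c = ENNReal.ofReal c.toReal := (ENNReal.ofReal_toReal hc.ne_top).symm
    _ ≤ packEntropyEps T ε' K :=
      le_iSup_of_le c.toReal (le_iSup_of_le hK_top le_rfl)
    _ ≤ ⨆ (K : Set X) (_ : K ⊆ Z) (_ : IsCompact K), packEntropyEps T ε' K :=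
      le_iSup_of_le K (le_iSup_of_le hKZ (le_iSup_of_le hK le_rfl))

end Compact

theorem packEntropy_analytic_eq_iSup_compact_general {X : Type*} [MetricSpace X]
    (T : X → X) (hT : Continuous T) (Z : Set X) (hZ : AnalyticSet Z) :
    packEntropy T Z = ⨆ (K : Set X) (_ : K ⊆ Z) (_ : IsCompact K), packEntropy T K := by
  refine le_antisymm (iSup₂_le fun ε hε => ?_)
    (iSup_le fun K => iSup₂_le fun hKZ _ => packEntropy_mono hKZ)
  refine (packEntropyEps_le_iSup_isCompact hT hZ (half_lt_self hε)).trans ?_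
  gcongr
  exact le_iSup₂_of_le (ε / 2) (half_pos hε) le_rfl

/-- **Feng–Huang, Theorem 1.3(ii)**: for a topological dynamical system `(X,T)` and any
analytic set `Z ⊆ X`, `h^P_top(T,Z) = sup { h^P_top(T,K) : K ⊆ Z compact }`. -/
theorem packEntropy_analytic_eq_iSup_compact
    {X : Type*} [MetricSpace X] [CompactSpace X]
    (T : X → X) (hT : Continuous T)
    (Z : Set X) (hZ : MeasureTheory.AnalyticSet Z) :
    packEntropy T Z = ⨆ (K : Set X) (_ : K ⊆ Z) (_ : IsCompact K), packEntropy T K :=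
  packEntropy_analytic_eq_iSup_compact_general T hT Z hZ
end
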